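/- Let Z ⊆ ℝ^n be nonempty, closed and convex, let F : Z → ℝ^n be ℓ_F-Lipschitz, let g ∈ ℝ^n be any fixed vector, let w_k ∈ Z and γ_k > 0, and define z_{k+1} = argmin_{z∈Z} γ_k (z − w_k)ᵀ(F(w_k) + g) + ½‖z − w_k‖² and w_{k+1} = argmin_{z∈Z} γ_k (z − w_k)ᵀ(F(z_{k+1}) + g) + ½‖z − w_k‖² (Euclidean projections of w_k − γ_k(F(w_k)+g) and w_k − γ_k(F(z_{k+1})+g) onto Z). Then for all z ∈ Z: γ_k (z_{k+1} − z)ᵀ(F(z_{k+1}) + g) ≤ ½(‖z − w_k‖² − ‖z − w_{k+1}‖²) − (½ − γ_k² ℓ_F² / 2)‖z_{k+1} − w_k‖². -/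

import Mathlib

open scoped InnerProductSpace

noncomputable section

/-- `p = argmin_{z ∈ Z} γ ⟪z - w, u⟫ + ½ ‖z - w‖²`, i.e. `p` is the Euclidean projection
onto `Z` of `w - γ u`. -/
def IsArgminStep {E : Type*} [NormedAddCommGroup E] [InnerProductSpace ℝ E]
    (Z : Set E) (w : E) (γ : ℝ) (u : E) (p : E) : Prop :=
  p ∈ Z ∧ ∀ z ∈ Z, γ * ⟪p - w, u⟫_ℝ + ‖p - w‖ ^ 2 / 2 ≤ γ * ⟪z - w, u⟫_ℝ + ‖z - w‖ ^ 2 / 2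

/-- The accelerated mirror-prox (AMP) iteration on `Z` for the operator `F` and the gradient
`G'` of `G`, with parameters `a k` (the `α_k`) and `g k` (the `γ_k`), and iterates
`zmd k = z_k^{md}`, `z k = z_k`, `w k = w_k`, `zag k = z_k^{ag}` for `k ≥ 1`:
initialization `z 1 = z_1^{ag} = w 1 ∈ Z` and, for `k ≥ 1`,
`z_k^{md} = (1 - α_k) z_k^{ag} + α_k w_k`,
`z_{k+1} = argmin_{z ∈ Z} γ_k ⟪z - w_k, F(w_k) + ∇G(z_k^{md})⟫ + ½‖z - w_k‖²`,
`w_{k+1} = argmin_{z ∈ Z} γ_k ⟪z - w_k, F(z_{k+1}) + ∇G(z_k^{md})⟫ + ½‖z - w_k‖²`,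
`z_{k+1}^{ag} = (1 - α_k) z_k^{ag} + α_k z_{k+1}`. -/
def IsAMP {E : Type*} [NormedAddCommGroup E] [InnerProductSpace ℝ E]
    (Z : Set E) (F : E → E) (G' : E → E) (a g : ℕ → ℝ) (zmd z w zag : ℕ → E) : Prop :=
  z 1 = w 1 ∧ zag 1 = w 1 ∧ w 1 ∈ Z ∧
  ∀ k, 1 ≤ k →
    zmd k = (1 - a k) • zag k + a k • w k ∧
    IsArgminStep Z (w k) (g k) (F (w k) + G' (zmd k)) (z (k + 1)) ∧
    IsArgminStep Z (w k) (g k) (F (z (k + 1)) + G' (zmd k)) (w (k + 1)) ∧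
    zag (k + 1) = (1 - a k) • zag k + a k • z (k + 1)

/-- The three-point inequality: by strong convexity of the objective, an `IsArgminStep` minimizer
beats every competitor `z` by at least `½ ‖z - p‖²`. -/
theorem IsArgminStep.three_point {E : Type*} [NormedAddCommGroup E] [InnerProductSpace ℝ E]
    {Z : Set E} (hZ : Convex ℝ Z) {w u p : E} {γ : ℝ} (hp : IsArgminStep Z w γ u p)
    {z : E} (hz : z ∈ Z) :
    γ * ⟪p - z, u⟫_ℝ ≤ (‖z - w‖ ^ 2 - ‖p - w‖ ^ 2 - ‖z - p‖ ^ 2) / 2 := by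
  have hsplit : z - w = (p - w) + (z - p) := by abel
  have hneg : ⟪p - z, u⟫_ℝ = -⟪z - p, u⟫_ℝ := by rw [← inner_neg_left, neg_sub]
  rw [hsplit, norm_add_sq_real, hneg]
  suffices h : 0 ≤ γ * ⟪z - p, u⟫_ℝ + ⟪p - w, z - p⟫_ℝ by linarith
  have hquad : ∀ t : ℝ, 0 ≤ t → t ≤ 1 →
      0 ≤ t * (γ * ⟪z - p, u⟫_ℝ + ⟪p - w, z - p⟫_ℝ) + t ^ 2 * (‖z - p‖ ^ 2 / 2) := by
    intro t ht0 ht1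
    have hmin := hp.2 _ (hZ.add_smul_sub_mem hp.1 hz ⟨ht0, ht1⟩)
    rw [add_sub_right_comm, norm_add_sq_real, inner_add_left, real_inner_smul_left,
      real_inner_smul_right, norm_smul, mul_pow, Real.norm_eq_abs, sq_abs] at hmin
    linarith
  have hB : 0 ≤ ‖z - p‖ ^ 2 / 2 := by positivity
  generalize γ * ⟪z - p, u⟫_ℝ + ⟪p - w, z - p⟫_ℝ = A at hquad ⊢
  generalize ‖z - p‖ ^ 2 / 2 = B at hquad hB
  by_contra! hA
  have hBA : 0 < B - A := by linarith
  have h := hquad (-A / (B - A)) (div_nonneg (by linarith) hBA.le)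
    ((div_le_one hBA).2 (by linarith))
  have heq : -A / (B - A) * A + (-A / (B - A)) ^ 2 * B = A ^ 3 / (B - A) ^ 2 := by
    field_simp
    ring
  rw [heq] at h
  exact absurd h (not_le.2 (div_neg_of_neg_of_pos (Odd.pow_neg (by decide) hA) (by positivity)))

/-- Lemma AMP-descent: the one-step descent inequality.
Let `Z ⊆ ℝ^n` be nonempty, closed and convex, `F` be `ℓ_F`-Lipschitz on `Z`, `g ∈ ℝ^n` a
fixed vector, `w_k ∈ Z`, `γ_k > 0`, and let
`z_{k+1} = argmin_{z ∈ Z} γ_k ⟪z - w_k, F(w_k) + g⟫ + ½‖z - w_k‖²` and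
`w_{k+1} = argmin_{z ∈ Z} γ_k ⟪z - w_k, F(z_{k+1}) + g⟫ + ½‖z - w_k‖²`.  Then for all
`z ∈ Z`, `γ_k ⟪z_{k+1} - z, F(z_{k+1}) + g⟫ ≤ ½(‖z - w_k‖² - ‖z - w_{k+1}‖²)
- (½ - γ_k² ℓ_F²/2) ‖z_{k+1} - w_k‖²`. -/
theorem statement_5 {n : ℕ} (Z : Set (EuclideanSpace ℝ (Fin n)))
    (hZne : Z.Nonempty) (hZclosed : IsClosed Z) (hZconvex : Convex ℝ Z)
    (ℓF : ℝ)
    (F : EuclideanSpace ℝ (Fin n) → EuclideanSpace ℝ (Fin n))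
    (hFlip : ∀ z ∈ Z, ∀ z' ∈ Z, ‖F z - F z'‖ ≤ ℓF * ‖z - z'‖)
    (gvec : EuclideanSpace ℝ (Fin n))
    (wk : EuclideanSpace ℝ (Fin n)) (hwk : wk ∈ Z) (γ : ℝ) (hγ : 0 < γ)
    (zk1 wk1 : EuclideanSpace ℝ (Fin n))
    (hzk1 : IsArgminStep Z wk γ (F wk + gvec) zk1)
    (hwk1 : IsArgminStep Z wk γ (F zk1 + gvec) wk1) :
    ∀ z ∈ Z,
      γ * ⟪zk1 - z, F zk1 + gvec⟫_ℝ ≤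
        (‖z - wk‖ ^ 2 - ‖z - wk1‖ ^ 2) / 2 - (1 / 2 - γ ^ 2 * ℓF ^ 2 / 2) * ‖zk1 - wk‖ ^ 2 := by
  intro z hz
  have hz_step := hzk1.three_point hZconvex hwk1.1
  have hw_step := hwk1.three_point hZconvex hz
  have hsplit : ⟪zk1 - z, F zk1 + gvec⟫_ℝ = ⟪wk1 - z, F zk1 + gvec⟫_ℝ
      + ⟪zk1 - wk1, F wk + gvec⟫_ℝ + ⟪zk1 - wk1, F zk1 - F wk⟫_ℝ := by
    simp only [inner_sub_left, inner_add_right, inner_sub_right]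
    ring
  have hcross : γ * ⟪zk1 - wk1, F zk1 - F wk⟫_ℝ ≤
      ‖wk1 - zk1‖ * (γ * (ℓF * ‖zk1 - wk‖)) := by
    calc γ * ⟪zk1 - wk1, F zk1 - F wk⟫_ℝ
        ≤ γ * (‖zk1 - wk1‖ * ‖F zk1 - F wk‖) := by
          gcongr
          exact real_inner_le_norm _ _
      _ ≤ γ * (‖zk1 - wk1‖ * (ℓF * ‖zk1 - wk‖)) := by
          gcongr
          exact hFlip _ hzk1.1 _ hwk
      _ = ‖wk1 - zk1‖ * (γ * (ℓF * ‖zk1 - wk‖)) := by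
          rw [norm_sub_rev]
          ring
  rw [hsplit]
  linarith [two_mul_le_add_sq ‖wk1 - zk1‖ (γ * (ℓF * ‖zk1 - wk‖))]
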